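/- arXiv:1804.03982 — 2 statements merged into one kernel-verified Lean document; each statement's English description precedes it below -/
import Mathlib

section
/- Let k₁ ≤ k₂ be nonnegative integers, s = ⌊(k₂−k₁)/2⌋, and 0 ≤ x < 1. Then Ξ₂^{[k₁,k₂]}(x) := (1/4)∫₀^π∫₀^π cos(k₁θ₁)cos(k₂θ₂)/√(1+x²−x(cos θ₁+cos θ₂)) dθ₁dθ₂ equals (π²(1/2)_{k₁+k₂}(2x)^{k₁+k₂})/(4^{k₁+k₂+1} k₁! k₂!) · ∑_{j=0}^{s} [((k₁−k₂)/2)_j ((k₁−k₂+1)/2)_j (k₁+k₂+1/2)_{2j} x^{2j}] / [(k₁+1)_j (k₂+1)_j (k₁+k₂+1)_j j!] · ₃F₂(1/2+j, k₁+1/2+j, k₁+k₂+1/2+2j; k₂+1+j, k₁+k₂+1+j; −x²). -/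
open Real

/-- The rising factorial (Pochhammer symbol) over ℝ. -/
noncomputable def rising (a : ℝ) (n : ℕ) : ℝ := (ascPochhammer ℝ n).eval a

/-- Clausen's generalized hypergeometric series ₃F₂(a₁,a₂,a₃;b₁,b₂;x). -/
noncomputable def clausen3F2 (a₁ a₂ a₃ b₁ b₂ x : ℝ) : ℝ :=
  ∑' n : ℕ, rising a₁ n * rising a₂ n * rising a₃ n /
    (rising b₁ n * rising b₂ n * n.factorial) * x ^ n

/-- The rank-2 Melnikov function Ξ₂^{[k₁,k₂]}. -/
noncomputable def Xi2 (k₁ k₂ : ℕ) (x : ℝ) : ℝ :=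
  (1 / 4) * ∫ θ₁ in (0:ℝ)..π, ∫ θ₂ in (0:ℝ)..π,
    Real.cos (k₁ * θ₁) * Real.cos (k₂ * θ₂) /
      Real.sqrt (1 + x ^ 2 - x * (Real.cos θ₁ + Real.cos θ₂))

/-!
With `y = x / (1 + x ^ 2)`, the radicand of `Xi2` is `(1 + x ^ 2) * (1 - y * (cos θ₁ + cos θ₂))`,
and the binomial series reduces `Xi2` to the integrals of `(cos θ₁ + cos θ₂) ^ m` against
`cos (k₁ * θ₁) * cos (k₂ * θ₂)`. These count planar walks of length `m` between the origin and
`(k₁, k₂)`; in the coordinates `k₁ + k₂`, `k₁ - k₂` a planar walk is a pair of independent walks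
on `ℤ`, so the count is a product of two binomial coefficients. Expanding the remaining powers of
`1 + x ^ 2` gives a double power series. Its coefficients, and those of the sum of Clausen series,
are two partial sums, each evaluated by the Pfaff–Saalschütz theorem, of one and the same triple
series. The rearrangement is absolutely convergent only for small `x`; as both sides are analytic
on `(-1, 1)`, the identity theorem does the rest.
-/

open scoped Nat
open Finset (range)
open Finset.HasAntidiagonal (antidiagonal)

section RisingFactorial

theorem rising_zero (a : ℝ) : rising a 0 = 1 := by simp [rising]

theorem rising_succ (a : ℝ) (n : ℕ) : rising a (n + 1) = rising a n * (a + n) := by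
  simp [rising, ascPochhammer_succ_eval]

theorem rising_add (a : ℝ) (m n : ℕ) : rising a (m + n) = rising a m * rising (a + m) n := by
  induction n with
  | zero => simp [rising_zero]
  | succ n ih => rw [← add_assoc, rising_succ, rising_succ, ih]; push_cast; ring

theorem rising_succ' (a : ℝ) (n : ℕ) : rising a (n + 1) = a * rising (a + 1) n := by
  rw [add_comm n, rising_add, rising_succ, rising_zero]; simp

theorem rising_pos {a : ℝ} (ha : 0 < a) (n : ℕ) : 0 < rising a n :=
  ascPochhammer_pos n a ha

theorem rising_natCast_add_one (k n : ℕ) : rising (k + 1) n = (k + n)! / k ! :=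
  eq_div_of_mul_eq (by positivity) <| (mul_comm _ _).trans <| factorial_mul_ascPochhammer ℝ k n

theorem rising_two_mul (a : ℝ) (n : ℕ) :
    rising (2 * a) (2 * n) = 4 ^ n * rising a n * rising (a + 1 / 2) n := by
  induction n with
  | zero => simp [rising_zero]
  | succ n ih =>
    rw [mul_add_one, rising_add, ih]
    simp only [rising_succ, rising_zero]
    push_cast; ring

theorem rising_one_sub_sub (a : ℝ) (n : ℕ) :
    rising (1 - a - n) n = (-1) ^ n * rising a n := by
  induction n with
  | zero => simp [rising_zero]
  | succ n ih =>
    rw [rising_succ', rising_succ,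
      show 1 - a - (n + 1 : ℕ) + 1 = 1 - a - n by push_cast; ring, ih]
    push_cast; ring

theorem rising_neg_natCast_add (r l : ℕ) :
    rising (-((r + l : ℕ) : ℝ)) l = (-1) ^ l * ((r + l)! / r !) := by
  rw [← rising_natCast_add_one, ← rising_one_sub_sub]; congr 1; push_cast; ring

theorem rising_neg_natCast_of_lt {k n : ℕ} (h : k < n) : rising (-(k : ℝ)) n = 0 :=
  ascPochhammer_eval_neg_coe_nat_of_lt h

theorem cast_factorial_add_two_mul (k n : ℕ) :
    ((k + 2 * n)! : ℝ) = 4 ^ n * k ! * rising ((k + 1) / 2) n * rising (k / 2 + 1) n := by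
  have h := rising_two_mul ((k + 1 : ℝ) / 2) n
  rw [show 2 * ((k + 1 : ℝ) / 2) = k + 1 by ring,
    show (k + 1 : ℝ) / 2 + 1 / 2 = k / 2 + 1 by ring, rising_natCast_add_one,
    div_eq_iff (by positivity)] at h
  rw [h]; ring

end RisingFactorial

section Saalschutz

-- Zeilberger's recurrence: `u (n + 1) j - (b + d + n) (a + d + n) u n j` telescopes in `j`, where
-- `u n j` is the summand of `sum_antidiagonal_saalschutz`.
theorem sum_range_saalschutz_sub (a b d : ℝ) {n p : ℕ} (hp : p ≤ n) :
    ∑ j ∈ range (p + 1),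
      ((n + 1).choose j * rising a j * rising b j * rising (a + b + d + j) (n + 1 - j) *
          rising d (n + 1 - j) -
        (b + d + n) * (a + d + n) *
          (n.choose j * rising a j * rising b j * rising (a + b + d + j) (n - j) *
            rising d (n - j))) =
      -(n.choose p * rising a (p + 1) * rising b (p + 1) * rising (a + b + d + p) (n - p) *
        rising d (n - p)) := by
  induction p with
  | zero =>
    simp only [zero_add, Finset.sum_range_one, Nat.choose_zero_right, Nat.sub_zero, rising_zero,
      rising_succ, Nat.cast_zero, Nat.cast_one]
    ring
  | succ p ih =>
    obtain ⟨q, rfl⟩ := Nat.exists_eq_add_of_le hp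
    have choose_rec : ((p + 1 + q).choose (p + 1) : ℝ) * (p + 1) =
        (p + 1 + q).choose p * (q + 1) := by
      have := Nat.choose_succ_right_eq (p + 1 + q) p
      rw [show p + 1 + q - p = q + 1 by lia] at this
      exact_mod_cast this
    have rising_shift : rising (a + b + d + p) (q + 1) =
        (a + b + d + p) * rising (a + b + d + (p + 1 : ℕ)) q := by
      rw [rising_succ']; push_cast; ring_nf
    rw [Finset.sum_range_succ, ih (by lia), Nat.choose_succ_succ (p + 1 + q) p,
      show p + 1 + q - p = q + 1 by lia, show p + 1 + q + 1 - (p + 1) = q + 1 by lia,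
      show p + 1 + q - (p + 1) = q by lia, rising_shift, rising_succ _ q, rising_succ _ q,
      rising_succ a (p + 1), rising_succ b (p + 1)]
    push_cast
    linear_combination (-rising a (p + 1) * rising b (p + 1) *
      rising (a + b + d + (p + 1)) q * rising d q * (d + q)) * choose_rec

-- The Pfaff–Saalschütz theorem with its denominators cleared, so that no parameter is excluded.
theorem sum_antidiagonal_saalschutz (a b d : ℝ) (n : ℕ) :
    ∑ q ∈ antidiagonal n, n.choose q.1 * rising a q.1 * rising b q.1 *
        rising (a + b + d + q.1) q.2 * rising d q.2 =
      rising (a + d) n * rising (b + d) n := by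
  rw [Finset.Nat.sum_antidiagonal_eq_sum_range_succ_mk]
  induction n with
  | zero => simp [rising_zero]
  | succ n ih =>
    have telescoped := sum_range_saalschutz_sub a b d le_rfl (n := n)
    rw [Finset.sum_sub_distrib, ← Finset.mul_sum, ih] at telescoped
    rw [Finset.sum_range_succ, rising_succ (a + d), rising_succ (b + d)]
    simp only [Nat.choose_self, Nat.sub_self, rising_zero] at telescoped ⊢
    linear_combination telescoped

end Saalschutz

section Coefficients

/-- The coefficients of the series `clausen3F2`. -/
noncomputable def clausenCoeff (a₁ a₂ a₃ b₁ b₂ : ℝ) (n : ℕ) : ℝ :=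
  rising a₁ n * rising a₂ n * rising a₃ n / (rising b₁ n * rising b₂ n * n !)

/-- The coefficient of `x ^ (k₁ + k₂ + 2 * (i + l))` in `Xi2 k₁ k₂ x`, up to the factor `π ^ 2 / 4`,
contributed by the `l`-th term of the binomial series of `(1 + x ^ 2) ^ (-(m + 1 / 2))`, where
`m = k₁ + k₂ + 2 * i`. -/
noncomputable def xi2BinomialCoeff (k₁ k₂ i l : ℕ) : ℝ :=
  rising (1 / 2) (k₁ + k₂ + 2 * i + l) * (k₁ + k₂ + 2 * i)! * (-1) ^ l /
    (2 ^ (k₁ + k₂ + 2 * i) * l ! * i ! * (k₁ + k₂ + i)! * (k₁ + i)! * (k₂ + i)!)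

/-- The factor in front of `x ^ (k₁ + k₂ + 2 * j)` times the `j`-th Clausen series in the
representation of `Xi2 k₁ k₂ x`, up to the factor `π ^ 2 / 4`. -/
noncomputable def xi2ClausenWeight (k₁ k₂ j : ℕ) : ℝ :=
  rising (1 / 2) (k₁ + k₂) / (2 ^ (k₁ + k₂) * k₁ ! * k₂ !) *
    (rising ((k₁ - k₂) / 2) j * rising ((k₁ - k₂ + 1) / 2) j * rising (k₁ + k₂ + 1 / 2) (2 * j) /
      (rising (k₁ + 1) j * rising (k₂ + 1) j * rising (k₁ + k₂ + 1) j * j !))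

/-- The coefficient of `x ^ (k₁ + k₂ + 2 * (j + p))` contributed by the `p`-th term of the `j`-th
Clausen series in the representation of `Xi2 k₁ k₂ x`, up to the factor `π ^ 2 / 4`. -/
noncomputable def xi2ClausenCoeff (k₁ k₂ j p : ℕ) : ℝ :=
  xi2ClausenWeight k₁ k₂ j *
    (clausenCoeff (1 / 2 + j) (k₁ + 1 / 2 + j) (k₁ + k₂ + 1 / 2 + 2 * j) (k₂ + 1 + j)
      (k₁ + k₂ + 1 + j) p * (-1) ^ p)

/-- The common refinement of `xi2BinomialCoeff` (summed over `j + r = i`) and `xi2ClausenCoeff`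
(summed over `r + l = p`). -/
noncomputable def xi2TripleCoeff (k₁ k₂ j r l : ℕ) : ℝ :=
  (k₁ + k₂)! * rising (1 / 2) (k₁ + k₂ + 2 * j + 2 * r + l) * (-1) ^ l *
      rising ((k₁ - k₂) / 2) j * rising ((k₁ - k₂ + 1) / 2) j * rising (k₂ + 1 / 2) r /
    (2 ^ (k₁ + k₂) * j ! * r ! * l ! * (k₁ + j)! * (k₁ + k₂ + j + r)! * (k₂ + j + r)!)

theorem xi2BinomialCoeff_eq_sum_xi2TripleCoeff (k₁ k₂ i l : ℕ) :
    xi2BinomialCoeff k₁ k₂ i l = ∑ q ∈ antidiagonal i, xi2TripleCoeff k₁ k₂ q.1 q.2 l := by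
  have saalschutz := sum_antidiagonal_saalschutz ((k₁ - k₂) / 2) ((k₁ - k₂ + 1) / 2) (k₂ + 1 / 2) i
  calc
    xi2BinomialCoeff k₁ k₂ i l =
        (k₁ + k₂)! * rising (1 / 2) (k₁ + k₂ + 2 * i + l) * (-1) ^ l /
            (2 ^ (k₁ + k₂) * l ! * i ! * (k₁ + k₂ + i)! * (k₁ + i)! * (k₂ + i)!) *
          (rising ((k₁ - k₂) / 2 + (k₂ + 1 / 2)) i *
            rising ((k₁ - k₂ + 1) / 2 + (k₂ + 1 / 2)) i) := by
      rw [xi2BinomialCoeff, cast_factorial_add_two_mul, pow_add 2, pow_mul,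
        show ((k₁ + k₂ : ℕ) + 1 : ℝ) / 2 = (k₁ - k₂) / 2 + (k₂ + 1 / 2) by push_cast; ring,
        show ((k₁ + k₂ : ℕ) : ℝ) / 2 + 1 = (k₁ - k₂ + 1) / 2 + (k₂ + 1 / 2) by push_cast; ring]
      norm_num
      field_simp
    _ = ∑ q ∈ antidiagonal i, xi2TripleCoeff k₁ k₂ q.1 q.2 l := by
      rw [← saalschutz, Finset.mul_sum]
      refine Finset.sum_congr rfl ?_
      rintro ⟨j, r⟩ hq
      obtain rfl : j + r = i := Finset.HasAntidiagonal.mem_antidiagonal.1 hq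
      have shift : ((k₁ : ℝ) - k₂) / 2 + (k₁ - k₂ + 1) / 2 + (k₂ + 1 / 2) + j =
          (k₁ + j : ℕ) + 1 := by push_cast; ring
      simp only [xi2TripleCoeff]
      rw [shift, rising_natCast_add_one, Nat.cast_add_choose, mul_add 2 j r]
      simp only [← add_assoc]
      field_simp

theorem xi2ClausenCoeff_eq_sum_xi2TripleCoeff (k₁ k₂ j p : ℕ) :
    xi2ClausenCoeff k₁ k₂ j p = ∑ q ∈ antidiagonal p, xi2TripleCoeff k₁ k₂ j q.1 q.2 := by
  have saalschutz := sum_antidiagonal_saalschutz (k₂ + 1 / 2) (k₁ + k₂ + 2 * j + p + 1 / 2)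
    (-((k₂ + j + p : ℕ) : ℝ)) p
  have reflect : rising (k₂ + 1 / 2 + -((k₂ + j + p : ℕ) : ℝ)) p =
      (-1) ^ p * rising (1 / 2 + j) p := by
    rw [← rising_one_sub_sub]; congr 1; push_cast; ring
  calc
    xi2ClausenCoeff k₁ k₂ j p =
        (k₁ + k₂)! * rising (1 / 2) (k₁ + k₂ + 2 * j + p) * rising ((k₁ - k₂) / 2) j *
            rising ((k₁ - k₂ + 1) / 2) j /
            (2 ^ (k₁ + k₂) * j ! * (k₁ + j)! * (k₂ + j + p)! * (k₁ + k₂ + j + p)! * p !) *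
          (rising (k₂ + 1 / 2 + -((k₂ + j + p : ℕ) : ℝ)) p *
            rising (k₁ + k₂ + 2 * j + p + 1 / 2 + -((k₂ + j + p : ℕ) : ℝ)) p) := by
      rw [xi2ClausenCoeff, xi2ClausenWeight, clausenCoeff, reflect,
        rising_add _ (k₁ + k₂ + 2 * j) p, rising_add _ (k₁ + k₂) (2 * j),
        show (1 / 2 : ℝ) + (k₁ + k₂ + 2 * j : ℕ) = k₁ + k₂ + 1 / 2 + 2 * j by push_cast; ring,
        show (1 / 2 : ℝ) + (k₁ + k₂ : ℕ) = k₁ + k₂ + 1 / 2 by push_cast; ring,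
        show (k₁ + k₂ + 2 * j + p + 1 / 2 + -((k₂ + j + p : ℕ) : ℝ)) = k₁ + 1 / 2 + j by
          push_cast; ring,
        show (k₂ + 1 + j : ℝ) = (k₂ + j : ℕ) + 1 by push_cast; ring,
        show (k₁ + k₂ + 1 + j : ℝ) = (k₁ + k₂ + j : ℕ) + 1 by push_cast; ring,
        show (k₁ + k₂ + 1 : ℝ) = (k₁ + k₂ : ℕ) + 1 by push_cast; ring]
      simp only [rising_natCast_add_one]
      field_simp
    _ = ∑ q ∈ antidiagonal p, xi2TripleCoeff k₁ k₂ j q.1 q.2 := by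
      rw [← saalschutz, Finset.mul_sum]
      refine Finset.sum_congr rfl ?_
      rintro ⟨r, l⟩ hq
      obtain rfl : r + l = p := Finset.HasAntidiagonal.mem_antidiagonal.1 hq
      have half_shift : (1 / 2 : ℝ) + (k₁ + k₂ + 2 * j + (r + l) : ℕ) =
          k₁ + k₂ + 2 * j + (r + l : ℕ) + 1 / 2 := by push_cast; ring
      have shift : (k₂ + 1 / 2 + (k₁ + k₂ + 2 * j + (r + l : ℕ) + 1 / 2) +
          -((k₂ + j + (r + l) : ℕ) : ℝ) + r) = (k₁ + k₂ + j + r : ℕ) + 1 := by push_cast; ring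
      simp only [xi2TripleCoeff]
      rw [show k₁ + k₂ + 2 * j + 2 * r + l = k₁ + k₂ + 2 * j + (r + l) + r by ring,
        rising_add _ (k₁ + k₂ + 2 * j + (r + l)) r, half_shift, shift, rising_natCast_add_one,
        ← add_assoc (k₂ + j) r l, rising_neg_natCast_add, Nat.cast_add_choose,
        ← add_assoc (k₁ + k₂ + j) r l]
      field_simp

theorem sum_antidiagonal_reassoc {A M : Type*} [AddMonoid A] [Finset.HasAntidiagonal A]
    [AddCommMonoid M] (f : A → A → A → M) (n : A) :
    ∑ q ∈ antidiagonal n, ∑ s ∈ antidiagonal q.1, f s.1 s.2 q.2 =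
      ∑ q ∈ antidiagonal n, ∑ s ∈ antidiagonal q.2, f q.1 s.1 s.2 := by
  rw [Finset.sum_sigma', Finset.sum_sigma']
  refine Finset.sum_nbij' (fun x ↦ ⟨(x.2.1, x.2.2 + x.1.2), (x.2.2, x.1.2)⟩)
    (fun x ↦ ⟨(x.1.1 + x.2.1, x.2.2), (x.1.1, x.2.1)⟩) ?_ ?_ ?_ ?_ fun _ _ ↦ rfl <;>
  · rintro ⟨⟨a, b⟩, c, d⟩ h
    simp only [Finset.mem_sigma, Finset.HasAntidiagonal.mem_antidiagonal] at h
    obtain ⟨rfl, rfl⟩ := h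
    simp [add_assoc]

/-- The coefficient of `x ^ (k₁ + k₂ + 2 * n)` in `Xi2 k₁ k₂ x`, up to the factor `π ^ 2 / 4`. -/
noncomputable def xi2Coeff (k₁ k₂ n : ℕ) : ℝ :=
  ∑ q ∈ antidiagonal n, xi2ClausenCoeff k₁ k₂ q.1 q.2

theorem sum_antidiagonal_xi2BinomialCoeff (k₁ k₂ n : ℕ) :
    ∑ q ∈ antidiagonal n, xi2BinomialCoeff k₁ k₂ q.1 q.2 = xi2Coeff k₁ k₂ n := by
  simp only [xi2Coeff, xi2BinomialCoeff_eq_sum_xi2TripleCoeff,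
    xi2ClausenCoeff_eq_sum_xi2TripleCoeff]
  exact sum_antidiagonal_reassoc (xi2TripleCoeff k₁ k₂) n

end Coefficients

section Series

theorem hasSum_sum_antidiagonal_of_rows {t : ℕ × ℕ → ℝ} {S : ℕ → ℝ}
    (hrow : ∀ i, HasSum (fun l ↦ t (i, l)) (S i)) (hnorm : Summable fun i ↦ ∑' l, ‖t (i, l)‖) :
    HasSum (fun n ↦ ∑ q ∈ antidiagonal n, t q) (∑' i, S i) := by
  have ht : Summable t := .of_norm <| (summable_prod_of_nonneg fun _ ↦ norm_nonneg _).2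
    ⟨fun i ↦ (hrow i).summable.norm, hnorm⟩
  rw [(ht.hasSum.prod_fiberwise hrow).tsum_eq]
  exact (Finset.HasAntidiagonal.sigmaAntidiagonalEquivProd.hasSum_iff.2 ht.hasSum).sigma
    fun n ↦ (antidiagonal n).hasSum t

theorem rising_div_factorial (a : ℝ) (n : ℕ) :
    rising a n / n ! = Ring.choose (a + n - 1) n := by
  have h := Ring.factorial_nsmul_multichoose_eq_ascPochhammer a n
  rw [Polynomial.ascPochhammer_smeval_eq_eval, nsmul_eq_mul] at h
  rw [rising, ← h, mul_div_cancel_left₀ _ (by positivity), Ring.choose]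
  congr
  ring

theorem hasSum_rising_div_factorial_mul_pow (a : ℝ) {w : ℝ} (hw : |w| < 1) :
    HasSum (fun n ↦ rising a n / n ! * w ^ n) ((1 - w) ^ (-a)) := by
  have h := (one_div_one_sub_rpow_hasFPowerSeriesOnBall_zero a).hasSum
    (y := w) (by simpa [enorm_eq_nnnorm, ← NNReal.coe_lt_coe] using hw)
  simp only [FormalMultilinearSeries.ofScalars_apply_eq, zero_add, smul_eq_mul] at h
  rw [rpow_neg (by linarith [(abs_lt.1 hw).2]), ← one_div]
  simpa only [rising_div_factorial] using h

theorem analyticAt_tsum_mul_pow {c : ℕ → ℝ} {r z : ℝ}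
    (h : ∀ w : ℝ, |w| < r → Summable fun n ↦ c n * w ^ n) (hz : |z| < r) :
    AnalyticAt ℝ (fun w ↦ ∑' n, c n * w ^ n) z := by
  obtain ⟨w, hzw, hwr⟩ := exists_between hz
  have hw : 0 < w := (abs_nonneg z).trans_lt hzw
  set p := FormalMultilinearSeries.ofScalars ℝ c with hp
  have radius : ENNReal.ofReal w ≤ p.radius := by
    refine p.le_radius_of_tendsto (l := 0) ?_
    have := (h w (by rwa [abs_of_pos hw])).tendsto_atTop_zero.norm
    rw [norm_zero] at this
    refine this.congr fun n ↦ ?_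
    rw [hp, FormalMultilinearSeries.ofScalars_norm, norm_mul, norm_pow,
      coe_toNNReal _ hw.le, norm_of_nonneg hw.le]
  have hsum : p.sum = fun w ↦ ∑' n, c n * w ^ n :=
    FormalMultilinearSeries.ofScalarsSum_eq_tsum c
  rw [← hsum]
  refine (p.hasFPowerSeriesOnBall ((ENNReal.ofReal_pos.2 hw).trans_le radius)).analyticAt_of_mem
    (Metric.eball_subset_eball radius ?_)
  rw [Metric.mem_eball, edist_dist, dist_eq, sub_zero]
  exact (ENNReal.ofReal_lt_ofReal_iff hw).2 hzw

theorem analyticAt_one_add_sq_rpow (a x : ℝ) : AnalyticAt ℝ (fun x : ℝ ↦ (1 + x ^ 2) ^ a) x :=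
  (ContDiffAt.rpow_const_of_ne (n := ⊤) (by fun_prop) (by positivity)).analyticAt

theorem summable_clausenCoeff_mul_pow (a₁ a₂ a₃ b₁ b₂ : ℝ) {z : ℝ} (hz : |z| < 1) :
    Summable fun n ↦ clausenCoeff a₁ a₂ a₃ b₁ b₂ n * z ^ n := by
  set q : ℕ → ℝ := fun n ↦ (a₁ + n) / (b₁ + n) * ((a₂ + n) / (b₂ + n)) * ((a₃ + n) / (1 + n)) * z
  have ratio (n : ℕ) : clausenCoeff a₁ a₂ a₃ b₁ b₂ (n + 1) * z ^ (n + 1) =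
      q n * (clausenCoeff a₁ a₂ a₃ b₁ b₂ n * z ^ n) := by
    simp only [q, clausenCoeff, rising_succ, Nat.factorial_succ, div_eq_mul_inv, mul_inv, pow_succ,
      Nat.cast_mul, Nat.cast_add_one]
    ring
  have quotient_tendsto (a b : ℝ) :
      Filter.Tendsto (fun n : ℕ ↦ (a + n) / (b + n)) Filter.atTop (nhds 1) := by
    simpa using tendsto_add_mul_div_add_mul_atTop_nhds a b 1 one_ne_zero
  have hq : Filter.Tendsto (fun n ↦ ‖q n‖) Filter.atTop (nhds |z|) := by
    simpa only [mul_one, one_mul, norm_eq_abs z] using ((((quotient_tendsto a₁ b₁).mul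
      (quotient_tendsto a₂ b₂)).mul (quotient_tendsto a₃ 1)).mul_const z).norm
  obtain ⟨r, hzr, hr⟩ := exists_between hz
  refine summable_of_ratio_norm_eventually_le hr ?_
  filter_upwards [hq.eventually_le_const hzr] with n hn
  rw [ratio, norm_mul]
  gcongr

end Series

section IteratedIntegral

variable {E : Type*} [NormedAddCommGroup E] [NormedSpace ℝ E] (a b c d : ℝ)

theorem integral_integral_add {f g : ℝ → ℝ → E} (hf : Continuous (Function.uncurry f))
    (hg : Continuous (Function.uncurry g)) :
    ∫ s in a..b, ∫ t in c..d, f s t + g s t =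
      (∫ s in a..b, ∫ t in c..d, f s t) + ∫ s in a..b, ∫ t in c..d, g s t := by
  have outer {h : ℝ → ℝ → E} (hh : Continuous (Function.uncurry h)) :
      IntervalIntegrable (fun s ↦ ∫ t in c..d, h s t) MeasureTheory.volume a b :=
    (intervalIntegral.continuous_parametric_intervalIntegral_of_continuous' hh c d
      ).intervalIntegrable _ _
  have inner {h : ℝ → ℝ → E} (hh : Continuous (Function.uncurry h)) (s : ℝ) :
      IntervalIntegrable (h s) MeasureTheory.volume c d :=
    (hh.comp (Continuous.prodMk_right s)).intervalIntegrable _ _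
  rw [← intervalIntegral.integral_add (outer hf) (outer hg)]
  simp only [intervalIntegral.integral_add (inner hf _) (inner hg _)]

theorem hasSum_integral_integral_of_norm_le {ι : Type*} [Countable ι] {F : ι → ℝ → ℝ → E}
    {f : ℝ → ℝ → E} {u : ι → ℝ} (hF : ∀ i, Continuous (Function.uncurry (F i)))
    (hFu : ∀ i s t, ‖F i s t‖ ≤ u i) (hu : Summable u)
    (hf : ∀ s t, HasSum (fun i ↦ F i s t) (f s t)) :
    HasSum (fun i ↦ ∫ s in a..b, ∫ t in c..d, F i s t) (∫ s in a..b, ∫ t in c..d, f s t) := by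
  have inner (s : ℝ) : HasSum (fun i ↦ ∫ t in c..d, F i s t) (∫ t in c..d, f s t) :=
    intervalIntegral.hasSum_integral_of_dominated_convergence (fun i _ ↦ u i)
      (fun i ↦ ((hF i).comp (Continuous.prodMk_right s)).aestronglyMeasurable)
      (fun i ↦ .of_forall fun t _ ↦ hFu i s t) (.of_forall fun _ _ ↦ hu) intervalIntegrable_const
      (.of_forall fun t _ ↦ hf s t)
  exact intervalIntegral.hasSum_integral_of_dominated_convergence (fun i _ ↦ u i * |d - c|)
    (fun i ↦ (intervalIntegral.continuous_parametric_intervalIntegral_of_continuous' (hF i) c d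
      ).aestronglyMeasurable)
    (fun i ↦ .of_forall fun s _ ↦
      intervalIntegral.norm_integral_le_of_norm_le_const fun t _ ↦ hFu i s t)
    (.of_forall fun _ _ ↦ hu.mul_right _) intervalIntegrable_const (.of_forall fun s _ ↦ inner s)

end IteratedIntegral

section CosineMoments

theorem integral_cos_intCast_mul (p : ℤ) :
    ∫ s in (0 : ℝ)..π, cos (p * s) = if p = 0 then π else 0 := by
  split_ifs with hp
  · simp [hp]
  · rw [intervalIntegral.integral_comp_mul_left _ (Int.cast_ne_zero.2 hp), integral_cos]
    simp [sin_int_mul_pi]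

/-- The integral of `(cos s + cos t) ^ m` against `cos (p * s) * cos (q * t)` over the square
`[0, π] × [0, π]`. -/
noncomputable def cosMoment (m : ℕ) (p q : ℤ) : ℝ :=
  ∫ s in (0 : ℝ)..π, ∫ t in (0 : ℝ)..π, cos (p * s) * cos (q * t) * (cos s + cos t) ^ m

theorem cosMoment_succ (m : ℕ) (p q : ℤ) :
    cosMoment (m + 1) p q = (cosMoment m (p + 1) q + cosMoment m (p - 1) q +
      (cosMoment m p (q + 1) + cosMoment m p (q - 1))) / 2 := by
  have two_cos_mul_cos (r : ℤ) (u : ℝ) :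
      2 * cos (r * u) * cos u = cos ((r + 1 : ℤ) * u) + cos ((r - 1 : ℤ) * u) := by
    rw [Real.two_mul_cos_mul_cos]; push_cast; ring_nf
  have integrand (s t : ℝ) : cos (p * s) * cos (q * t) * (cos s + cos t) ^ (m + 1) =
      (cos ((p + 1 : ℤ) * s) * cos (q * t) * (cos s + cos t) ^ m +
          cos ((p - 1 : ℤ) * s) * cos (q * t) * (cos s + cos t) ^ m +
        (cos (p * s) * cos ((q + 1 : ℤ) * t) * (cos s + cos t) ^ m +
          cos (p * s) * cos ((q - 1 : ℤ) * t) * (cos s + cos t) ^ m)) / 2 := by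
    linear_combination (cos (q * t) * (cos s + cos t) ^ m) / 2 * two_cos_mul_cos p s +
      (cos (p * s) * (cos s + cos t) ^ m) / 2 * two_cos_mul_cos q t
  simp only [cosMoment, integrand, intervalIntegral.integral_div]
  rw [integral_integral_add, integral_integral_add, integral_integral_add]
  all_goals unfold Function.uncurry; fun_prop

/-- The number of `m`-step walks on `ℤ` with steps `±1` leading from `u` to `0`. -/
def walkCount : ℕ → ℤ → ℕ
  | 0, u => if u = 0 then 1 else 0
  | m + 1, u => walkCount m (u + 1) + walkCount m (u - 1)

-- A step of the planar simple walk moves `p + q` and `p - q` by `±1` independently.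
theorem cosMoment_eq_walkCount_mul_walkCount (m : ℕ) (p q : ℤ) :
    cosMoment m p q = π ^ 2 * (walkCount m (p + q) * walkCount m (p - q) / 2 ^ m) := by
  induction m generalizing p q with
  | zero =>
    simp only [cosMoment, walkCount, pow_zero, mul_one, div_one,
      intervalIntegral.integral_const_mul, intervalIntegral.integral_mul_const,
      integral_cos_intCast_mul]
    have : p + q = 0 ∧ p - q = 0 ↔ p = 0 ∧ q = 0 := by lia
    split_ifs <;> simp_all [sq]
  | succ m ih =>
    simp only [cosMoment_succ, ih, walkCount]
    rw [show p + 1 + q = p + q + 1 by ring, show p + 1 - q = p - q + 1 by ring,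
      show p - 1 + q = p + q - 1 by ring, show p - 1 - q = p - q - 1 by ring,
      show p + (q + 1) = p + q + 1 by ring, show p - (q + 1) = p - q - 1 by ring,
      show p + (q - 1) = p + q - 1 by ring, show p - (q - 1) = p - q + 1 by ring]
    push_cast
    ring

theorem walkCount_eq_zero_of_lt {m : ℕ} {u : ℤ} (h : m < u) : walkCount m u = 0 := by
  induction m generalizing u with
  | zero => exact if_neg (by lia)
  | succ m ih => rw [walkCount, ih (by lia), ih (by lia)]

theorem walkCount_eq_zero_of_odd {m : ℕ} {u : ℤ} (h : Odd (m - u)) : walkCount m u = 0 := by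
  induction m generalizing u with
  | zero => exact if_neg (by grind)
  | succ m ih => rw [walkCount, ih (by grind), ih (by grind)]

theorem walkCount_sub_two_mul (m i : ℕ) : walkCount m (m - 2 * i) = m.choose i := by
  induction m generalizing i with
  | zero => cases i <;> simp [walkCount]; lia
  | succ m ih =>
    cases i with
    | zero =>
      have start := ih 0
      simp only [Nat.cast_zero, mul_zero, sub_zero, Nat.choose_zero_right] at start ⊢
      rw [walkCount, walkCount_eq_zero_of_lt (by lia), zero_add, Nat.cast_add_one,
        add_sub_cancel_right, start]
    | succ i =>
      rw [Nat.choose_succ_succ, ← ih i, ← ih (i + 1), walkCount]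
      push_cast
      congr 2 <;> ring

end CosineMoments

section Expansion

theorem hasSum_mul_cosMoment (a : ℝ) (p q : ℤ) {y : ℝ} (hy : |y| < 1 / 2) :
    HasSum (fun m ↦ rising a m / m ! * y ^ m * cosMoment m p q)
      (∫ s in (0 : ℝ)..π, ∫ t in (0 : ℝ)..π,
        cos (p * s) * cos (q * t) * (1 - y * (cos s + cos t)) ^ (-a)) := by
  have abs_cos_add_cos_le (s t : ℝ) : |cos s + cos t| ≤ 2 :=
    (abs_add_le _ _).trans (by linarith [abs_cos_le_one s, abs_cos_le_one t])
  have abs_mul_lt (s t : ℝ) : |y * (cos s + cos t)| < 1 := by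
    rw [abs_mul]
    nlinarith [abs_nonneg y, abs_cos_add_cos_le s t]
  have majorant : Summable fun m ↦ ‖rising a m / m ! * (|y| * 2) ^ m‖ :=
    (hasSum_rising_div_factorial_mul_pow a (by rw [abs_mul, abs_abs, abs_two]; linarith)
      ).summable.norm
  simp only [cosMoment, ← intervalIntegral.integral_const_mul]
  refine hasSum_integral_integral_of_norm_le 0 π 0 π (fun m ↦ ?_) (fun m s t ↦ ?_) majorant
    fun s t ↦ ?_
  · unfold Function.uncurry; fun_prop
  · rw [mul_assoc, norm_mul, norm_mul _ ((|y| * 2) ^ m)]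
    simp only [norm_eq_abs, abs_mul, abs_pow, abs_abs, abs_two, mul_pow]
    gcongr
    exact (mul_le_of_le_one_left (by positivity)
      (mul_le_one₀ (abs_cos_le_one _) (abs_nonneg _) (abs_cos_le_one _))).trans
        (by gcongr; exact abs_cos_add_cos_le s t)
  · refine ((hasSum_rising_div_factorial_mul_pow a (abs_mul_lt s t)).mul_left
      (cos (p * s) * cos (q * t))).congr_fun fun m ↦ ?_
    rw [mul_pow]
    ring

/-- The coefficients of `Xi2 k₁ k₂ x * (1 + x ^ 2) ^ (1 / 2)` as a power series in
`x / (1 + x ^ 2)`, up to the factor `π ^ 2 / 4`. -/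
noncomputable def xi2WalkCoeff (k₁ k₂ m : ℕ) : ℝ :=
  rising (1 / 2) m / m ! * (walkCount m (k₁ + k₂) * walkCount m (k₁ - k₂) / 2 ^ m)

theorem xi2WalkCoeff_eq_zero {k₁ k₂ m : ℕ} (hm : ∀ i, k₁ + k₂ + 2 * i ≠ m) :
    xi2WalkCoeff k₁ k₂ m = 0 := by
  have : walkCount m (k₁ + k₂) = 0 := by
    rcases lt_or_ge m (k₁ + k₂) with hlt | hge
    · exact walkCount_eq_zero_of_lt (mod_cast hlt)
    · refine walkCount_eq_zero_of_odd ?_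
      have := hm ((m - (k₁ + k₂)) / 2)
      grind
  simp [xi2WalkCoeff, this]

theorem xi2BinomialCoeff_eq_xi2WalkCoeff_mul (k₁ k₂ i l : ℕ) :
    xi2BinomialCoeff k₁ k₂ i l = xi2WalkCoeff k₁ k₂ (k₁ + k₂ + 2 * i) *
      (rising ((k₁ + k₂ + 2 * i : ℕ) + 1 / 2) l / l ! * (-1) ^ l) := by
  have total_add : i + (k₁ + k₂ + i) = k₁ + k₂ + 2 * i := by ring
  have total_sub : k₂ + i + (k₁ + i) = k₁ + k₂ + 2 * i := by ring
  have walks_add : walkCount (k₁ + k₂ + 2 * i) (k₁ + k₂) = (i + (k₁ + k₂ + i)).choose i := by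
    rw [total_add, ← walkCount_sub_two_mul]; congr 1; push_cast; ring
  have walks_sub :
      walkCount (k₁ + k₂ + 2 * i) (k₁ - k₂) = (k₂ + i + (k₁ + i)).choose (k₂ + i) := by
    rw [total_sub, ← walkCount_sub_two_mul]; congr 1; push_cast; ring
  rw [xi2BinomialCoeff, xi2WalkCoeff, walks_add, walks_sub, Nat.cast_add_choose,
    Nat.cast_add_choose, total_add, total_sub, rising_add, add_comm (1 / 2 : ℝ)]
  field_simp

theorem abs_xi2BinomialCoeff (k₁ k₂ i l : ℕ) :
    |xi2BinomialCoeff k₁ k₂ i l| = xi2BinomialCoeff k₁ k₂ i l * (-1) ^ l := by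
  have := rising_pos one_half_pos (k₁ + k₂ + 2 * i + l)
  rcases neg_one_pow_eq_or ℝ l with h | h <;> rw [xi2BinomialCoeff, h]
  · rw [abs_of_nonneg (by positivity), mul_one, mul_one]
  · rw [mul_neg_one, neg_div, abs_neg, abs_of_nonneg (by positivity), mul_neg_one, neg_neg]

theorem summable_xi2WalkCoeff_mul_pow (k₁ k₂ : ℕ) {y : ℝ} (hy : |y| < 1 / 2) :
    Summable fun m ↦ xi2WalkCoeff k₁ k₂ m * y ^ m := by
  refine (summable_mul_left_iff (pow_ne_zero 2 pi_ne_zero)).1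
    ((hasSum_mul_cosMoment (1 / 2) k₁ k₂ hy).summable.congr fun m ↦ ?_)
  rw [cosMoment_eq_walkCount_mul_walkCount, xi2WalkCoeff]
  ring

theorem abs_div_one_add_sq_lt {x : ℝ} (hx : |x| ≠ 1) : |x / (1 + x ^ 2)| < 1 / 2 := by
  have := sq_pos_of_ne_zero (sub_ne_zero.2 hx)
  rw [abs_div, abs_of_pos (by positivity : 0 < 1 + x ^ 2), div_lt_iff₀ (by positivity), ← sq_abs]
  linarith

theorem Xi2_eq_integral_one_sub_mul_rpow (k₁ k₂ : ℕ) (x : ℝ) :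
    Xi2 k₁ k₂ x = 1 / 4 * ((1 + x ^ 2) ^ (-(1 / 2) : ℝ) * ∫ s in (0 : ℝ)..π, ∫ t in (0 : ℝ)..π,
      cos (k₁ * s) * cos (k₂ * t) *
        (1 - x / (1 + x ^ 2) * (cos s + cos t)) ^ (-(1 / 2) : ℝ)) := by
  have integrand (s t : ℝ) :
      cos (k₁ * s) * cos (k₂ * t) / √(1 + x ^ 2 - x * (cos s + cos t)) =
        (1 + x ^ 2) ^ (-(1 / 2) : ℝ) * (cos (k₁ * s) * cos (k₂ * t) *
          (1 - x / (1 + x ^ 2) * (cos s + cos t)) ^ (-(1 / 2) : ℝ)) := by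
    have factored : 1 + x ^ 2 - x * (cos s + cos t) =
        (1 + x ^ 2) * (1 - x / (1 + x ^ 2) * (cos s + cos t)) := by
      field_simp
    have nonneg : 0 ≤ 1 - x / (1 + x ^ 2) * (cos s + cos t) := by
      refine nonneg_of_mul_nonneg_right (factored ▸ ?_) (by positivity : 0 < 1 + x ^ 2)
      nlinarith [sq_nonneg (x - cos s), sq_nonneg (x - cos t), cos_sq_le_one s, cos_sq_le_one t]
    rw [factored, sqrt_eq_rpow, mul_rpow (by positivity) nonneg, rpow_neg (by positivity),
      rpow_neg nonneg]
    ring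
  simp only [Xi2, integrand, intervalIntegral.integral_const_mul]

theorem hasSum_Xi2 (k₁ k₂ : ℕ) {x : ℝ} (hx : |x| ≠ 1) :
    HasSum (fun m ↦ π ^ 2 / 4 * ((1 + x ^ 2) ^ (-(1 / 2) : ℝ) *
      (xi2WalkCoeff k₁ k₂ m * (x / (1 + x ^ 2)) ^ m))) (Xi2 k₁ k₂ x) := by
  have h := ((hasSum_mul_cosMoment (1 / 2) k₁ k₂ (abs_div_one_add_sq_lt hx)).mul_left
    ((1 + x ^ 2) ^ (-(1 / 2) : ℝ))).mul_left (1 / 4)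
  simp only [Int.cast_natCast] at h
  rw [← Xi2_eq_integral_one_sub_mul_rpow] at h
  refine h.congr_fun fun m ↦ ?_
  rw [cosMoment_eq_walkCount_mul_walkCount, xi2WalkCoeff]
  ring

theorem analyticAt_Xi2 (k₁ k₂ : ℕ) {x : ℝ} (hx : |x| ≠ 1) : AnalyticAt ℝ (Xi2 k₁ k₂) x := by
  have series : AnalyticAt ℝ (fun y ↦ ∑' m, xi2WalkCoeff k₁ k₂ m * y ^ m) (x / (1 + x ^ 2)) :=
    analyticAt_tsum_mul_pow (fun _ ↦ summable_xi2WalkCoeff_mul_pow k₁ k₂)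
      (abs_div_one_add_sq_lt hx)
  have argument : AnalyticAt ℝ (fun x : ℝ ↦ x / (1 + x ^ 2)) x := by
    fun_prop (disch := positivity)
  refine (analyticAt_const.mul ((analyticAt_one_add_sq_rpow (-(1 / 2)) x).mul
    (series.comp_of_eq argument rfl))).congr (f := fun x : ℝ ↦ π ^ 2 / 4 * _) ?_
  filter_upwards [continuous_abs.continuousAt.eventually_ne hx] with u hu
  rw [← (hasSum_Xi2 k₁ k₂ hu).tsum_eq, tsum_mul_left, tsum_mul_left]
  rfl

theorem hasSum_xi2BinomialCoeff_mul (k₁ k₂ i : ℕ) (x : ℝ) {u : ℝ} (hu : |u| < 1) :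
    HasSum (fun l ↦ xi2BinomialCoeff k₁ k₂ i l * (x ^ (k₁ + k₂ + 2 * i) * u ^ l))
      ((1 + u) ^ (-(1 / 2) : ℝ) * (xi2WalkCoeff k₁ k₂ (k₁ + k₂ + 2 * i) *
        (x / (1 + u)) ^ (k₁ + k₂ + 2 * i))) := by
  have pos : 0 < 1 + u := by linarith [(abs_lt.1 hu).1]
  set m := k₁ + k₂ + 2 * i with hm
  have binomial := (hasSum_rising_div_factorial_mul_pow (m + 1 / 2) (w := -u) (by rwa [abs_neg])
    ).mul_left (xi2WalkCoeff k₁ k₂ m * x ^ m)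
  rw [sub_neg_eq_add, neg_add, rpow_add pos, rpow_neg pos.le m, rpow_natCast] at binomial
  rw [show (1 + u) ^ (-(1 / 2) : ℝ) * (xi2WalkCoeff k₁ k₂ m * (x / (1 + u)) ^ m) =
    xi2WalkCoeff k₁ k₂ m * x ^ m * (((1 + u) ^ m)⁻¹ * (1 + u) ^ (-(1 / 2) : ℝ)) by
      rw [div_pow]; ring]
  refine binomial.congr_fun fun l ↦ ?_
  rw [xi2BinomialCoeff_eq_xi2WalkCoeff_mul, neg_pow u, ← hm]
  ring

theorem add_two_mul_injective (k : ℕ) : Function.Injective fun i ↦ k + 2 * i :=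
  fun i j h ↦ by simpa using h

theorem summable_tsum_norm_xi2BinomialCoeff_mul (k₁ k₂ : ℕ) {x : ℝ} (hx : 2 * |x| < 1 - x ^ 2) :
    Summable fun i ↦
      ∑' l, ‖xi2BinomialCoeff k₁ k₂ i l * (x ^ (k₁ + k₂ + 2 * i) * (x ^ 2) ^ l)‖ := by
  have pos : 0 < 1 + -x ^ 2 := by linarith [abs_nonneg x]
  have hsq : |-x ^ 2| < 1 := by rw [abs_neg, abs_pow, sq_abs]; linarith
  have argument_lt : |(|x| / (1 + -x ^ 2))| < 1 / 2 := by
    rw [abs_div, abs_abs, abs_of_pos pos, div_lt_iff₀ pos]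
    linarith
  refine (((summable_xi2WalkCoeff_mul_pow k₁ k₂ argument_lt).comp_injective
    (add_two_mul_injective (k₁ + k₂))).mul_left ((1 + -x ^ 2) ^ (-(1 / 2) : ℝ))).congr fun i ↦ ?_
  rw [Function.comp_apply, ← (hasSum_xi2BinomialCoeff_mul k₁ k₂ i |x| hsq).tsum_eq]
  refine tsum_congr fun l ↦ ?_
  rw [norm_mul, norm_mul, norm_pow, norm_of_nonneg (by positivity : 0 ≤ (x ^ 2) ^ l),
    norm_eq_abs, norm_eq_abs, abs_xi2BinomialCoeff, neg_pow (x ^ 2)]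
  ring

theorem Xi2_eq_tsum_xi2WalkCoeff (k₁ k₂ : ℕ) {x : ℝ} (hx : |x| ≠ 1) :
    Xi2 k₁ k₂ x = π ^ 2 / 4 * ∑' i, (1 + x ^ 2) ^ (-(1 / 2) : ℝ) *
      (xi2WalkCoeff k₁ k₂ (k₁ + k₂ + 2 * i) * (x / (1 + x ^ 2)) ^ (k₁ + k₂ + 2 * i)) := by
  rw [← tsum_mul_left, ← (hasSum_Xi2 k₁ k₂ hx).tsum_eq]
  refine ((add_two_mul_injective (k₁ + k₂)).tsum_eq fun m hm ↦ ?_).symm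
  by_contra h
  exact hm (by simp [xi2WalkCoeff_eq_zero fun i hi ↦ h ⟨i, hi⟩])

theorem Xi2_eq_tsum_xi2Coeff_of_two_mul_abs_lt (k₁ k₂ : ℕ) {x : ℝ} (hx : 2 * |x| < 1 - x ^ 2) :
    Xi2 k₁ k₂ x = π ^ 2 / 4 * (x ^ (k₁ + k₂) * ∑' n, xi2Coeff k₁ k₂ n * (x ^ 2) ^ n) := by
  have hx1 : |x| < 1 := by nlinarith [abs_nonneg x]
  have hsq : |x ^ 2| < 1 := by rw [abs_pow, sq_abs]; linarith [abs_nonneg x]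
  have rows (i : ℕ) := hasSum_xi2BinomialCoeff_mul k₁ k₂ i x hsq
  have reordered := hasSum_sum_antidiagonal_of_rows
    (t := fun q ↦ xi2BinomialCoeff k₁ k₂ q.1 q.2 * (x ^ (k₁ + k₂ + 2 * q.1) * (x ^ 2) ^ q.2)) rows
    (summable_tsum_norm_xi2BinomialCoeff_mul k₁ k₂ hx)
  rw [Xi2_eq_tsum_xi2WalkCoeff k₁ k₂ hx1.ne, ← reordered.tsum_eq]
  congr 1
  rw [← tsum_mul_left]
  refine tsum_congr fun n ↦ ?_
  rw [← sum_antidiagonal_xi2BinomialCoeff, Finset.sum_mul, Finset.mul_sum]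
  refine Finset.sum_congr rfl fun q hq ↦ ?_
  rw [← Finset.HasAntidiagonal.mem_antidiagonal.1 hq]
  ring

end Expansion

section Clausen

theorem xi2ClausenWeight_eq_zero {k₁ k₂ j : ℕ} (hk : k₁ ≤ k₂) (hj : (k₂ - k₁) / 2 < j) :
    xi2ClausenWeight k₁ k₂ j = 0 := by
  obtain ⟨c, hc | hc⟩ := Nat.even_or_odd' (k₂ - k₁)
  · obtain rfl : k₂ = k₁ + 2 * c := by lia
    have := rising_neg_natCast_of_lt (by lia : c < j)
    rw [xi2ClausenWeight,
      show ((k₁ : ℝ) - (k₁ + 2 * c : ℕ)) / 2 = -c by push_cast; ring, this]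
    simp only [zero_mul, zero_div, mul_zero]
  · obtain rfl : k₂ = k₁ + (2 * c + 1) := by lia
    have := rising_neg_natCast_of_lt (by lia : c < j)
    rw [xi2ClausenWeight,
      show ((k₁ : ℝ) - (k₁ + (2 * c + 1) : ℕ) + 1) / 2 = -c by push_cast; ring, this]
    simp only [zero_mul, zero_div, mul_zero]

theorem hasSum_xi2ClausenCoeff_mul_pow (k₁ k₂ j : ℕ) {z : ℝ} (hz : |z| < 1) :
    HasSum (fun p ↦ xi2ClausenCoeff k₁ k₂ j p * z ^ (j + p))
      (xi2ClausenWeight k₁ k₂ j * z ^ j *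
        clausen3F2 (1 / 2 + j) (k₁ + 1 / 2 + j) (k₁ + k₂ + 1 / 2 + 2 * j) (k₂ + 1 + j)
          (k₁ + k₂ + 1 + j) (-z)) := by
  refine ((summable_clausenCoeff_mul_pow _ _ _ _ _ ((abs_neg z).trans_lt hz)).hasSum.mul_left
    _).congr_fun fun p ↦ ?_
  rw [xi2ClausenCoeff, neg_pow, pow_add]
  ring

theorem hasSum_xi2Coeff_mul_pow {k₁ k₂ : ℕ} (hk : k₁ ≤ k₂) {z : ℝ} (hz : |z| < 1) :
    HasSum (fun n ↦ xi2Coeff k₁ k₂ n * z ^ n)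
      (∑ j ∈ range ((k₂ - k₁) / 2 + 1), xi2ClausenWeight k₁ k₂ j * z ^ j *
        clausen3F2 (1 / 2 + j) (k₁ + 1 / 2 + j) (k₁ + k₂ + 1 / 2 + 2 * j) (k₂ + 1 + j)
          (k₁ + k₂ + 1 + j) (-z)) := by
  set s := range ((k₂ - k₁) / 2 + 1) with hs
  have vanish (j : ℕ) (hj : j ∉ s) : xi2ClausenWeight k₁ k₂ j = 0 :=
    xi2ClausenWeight_eq_zero hk (by simpa [hs] using hj)
  have h := hasSum_sum_antidiagonal_of_rows
    (t := fun q ↦ xi2ClausenCoeff k₁ k₂ q.1 q.2 * z ^ (q.1 + q.2))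
    (fun j ↦ hasSum_xi2ClausenCoeff_mul_pow k₁ k₂ j hz)
    (summable_of_ne_finset_zero (s := s) fun j hj ↦ by simp [xi2ClausenCoeff, vanish j hj])
  rw [tsum_eq_sum (s := s) fun j hj ↦ by simp [vanish j hj]] at h
  refine h.congr_fun fun n ↦ ?_
  rw [xi2Coeff, Finset.sum_mul]
  refine Finset.sum_congr rfl fun q hq ↦ ?_
  rw [← Finset.HasAntidiagonal.mem_antidiagonal.1 hq]

end Clausen

theorem Xi2_eq_tsum_xi2Coeff {k₁ k₂ : ℕ} (hk : k₁ ≤ k₂) {x : ℝ} (hx : |x| < 1) :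
    Xi2 k₁ k₂ x = π ^ 2 / 4 * (x ^ (k₁ + k₂) * ∑' n, xi2Coeff k₁ k₂ n * (x ^ 2) ^ n) := by
  have sq_lt {u : ℝ} (hu : u ∈ Set.Ioo (-1) 1) : |u ^ 2| < 1 := by
    rw [abs_pow]; exact pow_lt_one₀ (abs_nonneg u) (abs_lt.2 hu) two_ne_zero
  have analytic_left : AnalyticOnNhd ℝ (Xi2 k₁ k₂) (Set.Ioo (-1) 1) :=
    fun u hu ↦ analyticAt_Xi2 k₁ k₂ (abs_lt.2 hu).ne
  have analytic_right : AnalyticOnNhd ℝ (fun u ↦ π ^ 2 / 4 *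
      (u ^ (k₁ + k₂) * ∑' n, xi2Coeff k₁ k₂ n * (u ^ 2) ^ n)) (Set.Ioo (-1) 1) := by
    intro u hu
    have series : AnalyticAt ℝ (fun z ↦ ∑' n, xi2Coeff k₁ k₂ n * z ^ n) (u ^ 2) :=
      analyticAt_tsum_mul_pow (fun _ hw ↦ (hasSum_xi2Coeff_mul_pow hk hw).summable) (sq_lt hu)
    have square : AnalyticAt ℝ (fun u : ℝ ↦ u ^ 2) u := by fun_prop
    exact analyticAt_const.mul ((analyticAt_id.pow _).mul (series.comp_of_eq square rfl))
  refine analytic_left.eqOn_of_preconnected_of_eventuallyEq analytic_right isPreconnected_Ioo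
    (by simp : (0 : ℝ) ∈ Set.Ioo (-1) 1) ?_ (abs_lt.1 hx)
  filter_upwards [(isOpen_lt (f := fun u : ℝ ↦ 2 * |u|) (g := fun u ↦ 1 - u ^ 2) (by fun_prop)
    (by fun_prop)).mem_nhds (by simp : (0 : ℝ) ∈ _)] with u hu
  exact Xi2_eq_tsum_xi2Coeff_of_two_mul_abs_lt k₁ k₂ hu

theorem Xi2_representation_general (k₁ k₂ : ℕ) (hk : k₁ ≤ k₂) (x : ℝ) (hx : |x| < 1) :
    Xi2 k₁ k₂ x =
      π ^ 2 * rising (1 / 2) (k₁ + k₂) * (2 * x) ^ (k₁ + k₂) /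
          (4 ^ (k₁ + k₂ + 1) * (k₁.factorial : ℝ) * (k₂.factorial : ℝ)) *
        ∑ j ∈ Finset.range ((k₂ - k₁) / 2 + 1),
          rising (((k₁ : ℝ) - k₂) / 2) j * rising (((k₁ : ℝ) - k₂ + 1) / 2) j *
              rising ((k₁ : ℝ) + k₂ + 1 / 2) (2 * j) * x ^ (2 * j) /
            (rising ((k₁ : ℝ) + 1) j * rising ((k₂ : ℝ) + 1) j *
              rising ((k₁ : ℝ) + k₂ + 1) j * (j.factorial : ℝ)) *
          clausen3F2 (1 / 2 + j) (k₁ + 1 / 2 + j) (k₁ + k₂ + 1 / 2 + 2 * j)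
            (k₂ + 1 + j) (k₁ + k₂ + 1 + j) (-x ^ 2) := by
  have hsq : |x ^ 2| < 1 := by rw [abs_pow]; exact pow_lt_one₀ (abs_nonneg x) hx two_ne_zero
  have prefactor : π ^ 2 * rising (1 / 2) (k₁ + k₂) * (2 * x) ^ (k₁ + k₂) /
      (4 ^ (k₁ + k₂ + 1) * (k₁ ! : ℝ) * (k₂ ! : ℝ)) =
        π ^ 2 / 4 * x ^ (k₁ + k₂) *
          (rising (1 / 2) (k₁ + k₂) / (2 ^ (k₁ + k₂) * k₁ ! * k₂ !)) := by
    rw [pow_succ 4, show (4 : ℝ) ^ (k₁ + k₂) = 2 ^ (k₁ + k₂) * 2 ^ (k₁ + k₂) by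
      rw [← mul_pow]; norm_num, mul_pow]
    field_simp
  rw [Xi2_eq_tsum_xi2Coeff hk hx, (hasSum_xi2Coeff_mul_pow hk hsq).tsum_eq, prefactor,
    ← mul_assoc, Finset.mul_sum, Finset.mul_sum]
  refine Finset.sum_congr rfl fun j _ ↦ ?_
  rw [xi2ClausenWeight, pow_mul x 2 j]
  ring

theorem Xi2_representation (k₁ k₂ : ℕ) (hk : k₁ ≤ k₂)
    (x : ℝ) (hx0 : 0 ≤ x) (hx1 : x < 1) :
    Xi2 k₁ k₂ x =
      π ^ 2 * rising (1 / 2) (k₁ + k₂) * (2 * x) ^ (k₁ + k₂) /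
          (4 ^ (k₁ + k₂ + 1) * (k₁.factorial : ℝ) * (k₂.factorial : ℝ)) *
        ∑ j ∈ Finset.range ((k₂ - k₁) / 2 + 1),
          rising (((k₁ : ℝ) - k₂) / 2) j * rising (((k₁ : ℝ) - k₂ + 1) / 2) j *
              rising ((k₁ : ℝ) + k₂ + 1 / 2) (2 * j) * x ^ (2 * j) /
            (rising ((k₁ : ℝ) + 1) j * rising ((k₂ : ℝ) + 1) j *
              rising ((k₁ : ℝ) + k₂ + 1) j * (j.factorial : ℝ)) *
          clausen3F2 (1 / 2 + j) (k₁ + 1 / 2 + j) (k₁ + k₂ + 1 / 2 + 2 * j)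
            (k₂ + 1 + j) (k₁ + k₂ + 1 + j) (-x ^ 2) := by
  exact Xi2_representation_general k₁ k₂ hk x (abs_lt.2 ⟨by linarith, hx1⟩)
end

section
/- The function h(x) = Ξ₂^{[0,0]}(x) = (1/4)∫₀^π∫₀^π dθ₁dθ₂/√(1+x²−x(cos θ₁+cos θ₂)) satisfies on (0,1) the third-order ODE x³(1+x²) h'''(x) + 3x²(2x²+1) h''(x) + x(7x²+1) h'(x) + x² h(x) = 0. -/
open Real

/-- The lowest-mode rank-2 Melnikov function Ξ₂^{[0,0]}. -/
noncomputable def Xi200 (x : ℝ) : ℝ :=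
  (1 / 4) * ∫ θ₁ in (0:ℝ)..π, ∫ θ₂ in (0:ℝ)..π,
    (1 : ℝ) / Real.sqrt (1 + x ^ 2 - x * (Real.cos θ₁ + Real.cos θ₂))

/-!
Write `R` for the radicand and `w = R ^ (-1/2)`. Differentiating under the integral sign expresses
`Xi200` and its derivatives through the moments `∫∫ (∂R/∂x) ^ m * w ^ n`. The differential operator
of the theorem sends `w` to a divergence in the two angles: there is a function `Φ` (a
creative telescoping certificate) for which the image is `∂Φ(θ₁, θ₂)/∂θ₁ + ∂Φ(θ₂, θ₁)/∂θ₂`. As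
`Φ` has the factor `sin θ₁`, it vanishes for `θ₁ = 0` and `θ₁ = π`, so the divergence integrates
to zero.
-/

open Function MeasureTheory Set Topology

section Calculus

theorem hasDerivAt_one_div_sqrt {f : ℝ → ℝ} {f' t : ℝ} (hf : HasDerivAt f f' t)
    (hpos : 0 < f t) :
    HasDerivAt (fun s ↦ 1 / √(f s)) (-(1 / 2) * f' * (1 / √(f t)) ^ 3) t := by
  have hsqrt : √(f t) ≠ 0 := (sqrt_pos.2 hpos).ne'
  simp only [one_div]
  refine ((hf.sqrt hpos.ne').fun_inv hsqrt).congr_deriv ?_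
  field_simp

variable {𝕜 E : Type*} [RCLike 𝕜] [NormedAddCommGroup E]

theorem hasDerivAt_setIntegral_of_continuousOn [NormedSpace ℝ E] [NormedSpace 𝕜 E]
    {X : Type*} [TopologicalSpace X] [MeasurableSpace X] [OpensMeasurableSpace X]
    {μ : Measure X} [IsFiniteMeasureOnCompacts μ] {K : Set X} (hK : IsCompact K)
    (hK_meas : MeasurableSet K) {U : Set 𝕜} (hU : IsOpen U) {F F' : 𝕜 → X → E}
    (hF : ∀ x ∈ U, ContinuousOn (F x) K) (hF' : ContinuousOn (uncurry F') (U ×ˢ K))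
    (hderiv : ∀ x ∈ U, ∀ p ∈ K, HasDerivAt (F · p) (F' x p) x) {x : 𝕜} (hx : x ∈ U) :
    HasDerivAt (fun y ↦ ∫ p in K, F y p ∂μ) (∫ p in K, F' x p ∂μ) x := by
  obtain ⟨L, hL, hxL, hLU⟩ := exists_compact_subset hU hx
  obtain ⟨C, hC⟩ := (hL.prod hK).exists_bound_of_continuousOn
    (hF'.mono (prod_mono_left hLU))
  refine (hasDerivAt_integral_of_dominated_loc_of_deriv_le (bound := fun _ ↦ C)
    (mem_interior_iff_mem_nhds.1 hxL) ?_ ((hF x hx).integrableOn_compact' hK hK_meas)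
    ((hF'.uncurry_left x hx).aestronglyMeasurable_of_isCompact hK hK_meas) ?_
    (integrableOn_const hK.measure_ne_top) ?_).2
  · filter_upwards [hU.mem_nhds hx] with y hy
    exact (hF y hy).aestronglyMeasurable_of_isCompact hK hK_meas
  · exact ae_restrict_of_forall_mem hK_meas fun p hp y hy ↦ hC (y, p) ⟨hy, hp⟩
  · exact ae_restrict_of_forall_mem hK_meas fun p hp y hy ↦ hderiv y (hLU hy) p hp

theorem iteratedDeriv_succ_eq_of_eqOn [NormedSpace 𝕜 E] {n : ℕ} {f g : 𝕜 → E} {g' : E}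
    {U : Set 𝕜} (hU : IsOpen U) (hfg : EqOn (iteratedDeriv n f) g U) {x : 𝕜} (hx : x ∈ U)
    (hg : HasDerivAt g g' x) : iteratedDeriv (n + 1) f x = g' := by
  rw [iteratedDeriv_succ, (hfg.eventuallyEq_of_mem (hU.mem_nhds hx)).deriv_eq, hg.deriv]

theorem setIntegral_Icc_prod_Icc [NormedSpace ℝ E] {a b c d : ℝ} (hab : a ≤ b) (hcd : c ≤ d)
    {f : ℝ × ℝ → E} (hf : IntegrableOn f (Icc a b ×ˢ Icc c d)) :
    ∫ p in Icc a b ×ˢ Icc c d, f p = ∫ s in a..b, ∫ t in c..d, f (s, t) := by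
  simp only [intervalIntegral.integral_of_le hab, intervalIntegral.integral_of_le hcd,
    ← integral_Icc_eq_integral_Ioc]
  exact setIntegral_prod f hf

theorem setIntegral_Icc_prod_eq_zero_of_hasDerivAt [NormedSpace ℝ E] [CompleteSpace E]
    {Y : Type*} [MeasurableSpace Y] {ν : Measure Y} [SFinite ν] {a b : ℝ} (hab : a ≤ b)
    {T : Set Y} (hT : MeasurableSet T) {f f' : ℝ × Y → E}
    (hderiv : ∀ y ∈ T, ∀ t ∈ Icc a b, HasDerivAt (fun s ↦ f (s, y)) (f' (t, y)) t)
    (hf' : IntegrableOn f' (Icc a b ×ˢ T) (volume.prod ν))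
    (hendpoints : ∀ y ∈ T, f (a, y) = f (b, y)) :
    ∫ p in Icc a b ×ˢ T, f' p ∂(volume.prod ν) = 0 := by
  rw [IntegrableOn, ← Measure.prod_restrict] at hf'
  rw [← Measure.prod_restrict, integral_prod_symm f' hf']
  refine integral_eq_zero_of_ae ?_
  filter_upwards [hf'.prod_left_ae, ae_restrict_mem hT] with y hy_int hy
  rw [integral_Icc_eq_integral_Ioc, ← intervalIntegral.integral_of_le hab,
    intervalIntegral.integral_eq_sub_of_hasDerivAt
      (fun t ht ↦ hderiv y hy t (by rwa [uIcc_of_le hab] at ht))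
      ((intervalIntegrable_iff_integrableOn_Icc_of_le hab).2 hy_int), hendpoints y hy, sub_self,
    Pi.zero_apply]

end Calculus

namespace Xi200

/-- The values of the parameter at which the integrand of `Xi200` has no singularity. -/
def regularSet : Set ℝ := {x | |x| ≠ 1}

/-- The domain `[0, π]²` of the pair of angles, closed so that it is compact. -/
def angleSquare : Set (ℝ × ℝ) := Icc 0 π ×ˢ Icc 0 π

/-- The expression under the square root in `Xi200`. -/
noncomputable def radicand (x : ℝ) (θ : ℝ × ℝ) : ℝ := 1 + x ^ 2 - x * (cos θ.1 + cos θ.2)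

/-- The derivative of the radicand with respect to the parameter `x`. -/
noncomputable def radicandDeriv (x : ℝ) (θ : ℝ × ℝ) : ℝ := 2 * x - (cos θ.1 + cos θ.2)

/-- The integrand of `Xi200`. -/
noncomputable def kernel (x : ℝ) (θ : ℝ × ℝ) : ℝ := 1 / √(radicand x θ)

/-- The products of powers of `radicandDeriv` and `kernel`, whose span is closed under
differentiation in `x` and contains `kernel`. -/
noncomputable def momentIntegrand (m n : ℕ) (x : ℝ) (θ : ℝ × ℝ) : ℝ :=
  radicandDeriv x θ ^ m * kernel x θ ^ n

/-- The integrals through which `Xi200` and its derivatives are expressed. -/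
noncomputable def moment (m n : ℕ) (x : ℝ) : ℝ := ∫ θ in angleSquare, momentIntegrand m n x θ

/-- The component in the direction of the first angle of the vector field whose divergence is the
image of `kernel` under the differential operator; the other component is its mirror image. -/
noncomputable def flux (x : ℝ) (θ : ℝ × ℝ) : ℝ :=
  (1 - x ^ 2) * (sin θ.1 * (x * (1 + x ^ 2) / 2 + x ^ 2 / 4 * (7 * cos θ.2 + cos θ.1))
    * kernel x θ ^ 5)

/-- The derivative of `flux` with respect to the first angle. -/
noncomputable def fluxDeriv (x : ℝ) (θ : ℝ × ℝ) : ℝ :=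
  (1 - x ^ 2) *
    ((cos θ.1 * (x * (1 + x ^ 2) / 2 + x ^ 2 / 4 * (7 * cos θ.2 + cos θ.1))
        - x ^ 2 / 4 * sin θ.1 ^ 2) * kernel x θ ^ 5
      - 5 / 2 * x * sin θ.1 ^ 2
        * (x * (1 + x ^ 2) / 2 + x ^ 2 / 4 * (7 * cos θ.2 + cos θ.1)) * kernel x θ ^ 7)

theorem isOpen_regularSet : IsOpen regularSet := isOpen_ne_fun continuous_abs continuous_const

theorem isCompact_angleSquare : IsCompact angleSquare := isCompact_Icc.prod isCompact_Icc

theorem measurableSet_angleSquare : MeasurableSet angleSquare :=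
  measurableSet_Icc.prod measurableSet_Icc

variable {x : ℝ}

theorem radicand_pos (hx : x ∈ regularSet) (θ : ℝ × ℝ) : 0 < radicand x θ := by
  have hcos : |cos θ.1 + cos θ.2| ≤ 2 := by
    linarith [abs_add_le (cos θ.1) (cos θ.2), abs_cos_le_one θ.1, abs_cos_le_one θ.2]
  calc
    0 < (1 - |x|) ^ 2 := sq_pos_of_ne_zero (sub_ne_zero.2 (Ne.symm hx))
    _ = 1 + x ^ 2 - |x| * 2 := by rw [← sq_abs x]; ring
    _ ≤ 1 + x ^ 2 - |x| * |cos θ.1 + cos θ.2| := by gcongr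
    _ ≤ radicand x θ := by
      rw [← abs_mul]
      exact sub_le_sub_left (le_abs_self _) _

theorem radicand_mul_kernel_sq (hx : x ∈ regularSet) (θ : ℝ × ℝ) :
    radicand x θ * kernel x θ ^ 2 = 1 := by
  have hpos := radicand_pos hx θ
  rw [kernel, div_pow, sq_sqrt hpos.le, one_pow, mul_one_div_cancel hpos.ne']

theorem kernel_swap (x : ℝ) (θ : ℝ × ℝ) : kernel x θ.swap = kernel x θ := by
  simp only [kernel, radicand, Prod.fst_swap, Prod.snd_swap, add_comm]

section Continuity

variable {K : Set (ℝ × ℝ)}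

theorem continuousOn_uncurry_kernel : ContinuousOn (uncurry kernel) (regularSet ×ˢ K) := by
  refine continuousOn_const.div ?_ fun q hq ↦ (sqrt_pos.2 (radicand_pos hq.1 q.2)).ne'
  unfold radicand
  fun_prop

theorem continuousOn_uncurry_momentIntegrand (m n : ℕ) :
    ContinuousOn (uncurry (momentIntegrand m n)) (regularSet ×ˢ K) := by
  refine ContinuousOn.mul ?_ (continuousOn_uncurry_kernel.pow n)
  unfold radicandDeriv
  fun_prop

theorem continuous_fluxDeriv (hx : x ∈ regularSet) : Continuous (fluxDeriv x) := by
  have hkernel : Continuous (kernel x) :=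
    continuousOn_univ.1 (continuousOn_uncurry_kernel.uncurry_left x hx)
  unfold fluxDeriv
  fun_prop

theorem integrableOn_momentIntegrand (m n : ℕ) (hx : x ∈ regularSet) :
    IntegrableOn (momentIntegrand m n x) angleSquare :=
  ((continuousOn_uncurry_momentIntegrand m n).uncurry_left x hx).integrableOn_compact
    isCompact_angleSquare

end Continuity

section Differentiation

theorem hasDerivAt_radicand (x : ℝ) (θ : ℝ × ℝ) :
    HasDerivAt (radicand · θ) (radicandDeriv x θ) x := by
  refine (((hasDerivAt_pow 2 x).const_add 1).fun_sub
    ((hasDerivAt_id' x).mul_const (cos θ.1 + cos θ.2))).congr_deriv ?_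
  simp [radicandDeriv]

theorem hasDerivAt_radicandDeriv (x : ℝ) (θ : ℝ × ℝ) : HasDerivAt (radicandDeriv · θ) 2 x :=
  (((hasDerivAt_id' x).const_mul 2).sub_const (cos θ.1 + cos θ.2)).congr_deriv (mul_one 2)

theorem hasDerivAt_kernel (hx : x ∈ regularSet) (θ : ℝ × ℝ) :
    HasDerivAt (kernel · θ) (-(1 / 2) * radicandDeriv x θ * kernel x θ ^ 3) x :=
  hasDerivAt_one_div_sqrt (hasDerivAt_radicand x θ) (radicand_pos hx θ)

theorem hasDerivAt_kernel_angle (hx : x ∈ regularSet) (s t : ℝ) :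
    HasDerivAt (fun s ↦ kernel x (s, t)) (-(1 / 2) * (x * sin s) * kernel x (s, t) ^ 3) s := by
  refine hasDerivAt_one_div_sqrt ?_ (radicand_pos hx (s, t))
  refine ((((hasDerivAt_cos s).add_const (cos t)).const_mul x).const_sub
    (1 + x ^ 2)).congr_deriv ?_
  ring

theorem hasDerivAt_momentIntegrand (m n : ℕ) (hx : x ∈ regularSet) (θ : ℝ × ℝ) :
    HasDerivAt (momentIntegrand m n · θ)
      (2 * m * momentIntegrand (m - 1) n x θ - n / 2 * momentIntegrand (m + 1) (n + 2) x θ)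
      x := by
  refine (((hasDerivAt_radicandDeriv x θ).fun_pow m).fun_mul
    ((hasDerivAt_kernel hx θ).fun_pow n)).congr_deriv ?_
  unfold momentIntegrand
  cases n with
  | zero => push_cast; ring
  | succ n => rw [Nat.add_sub_cancel]; ring

theorem hasDerivAt_moment (m n : ℕ) (hx : x ∈ regularSet) :
    HasDerivAt (moment m n)
      (2 * m * moment (m - 1) n x - n / 2 * moment (m + 1) (n + 2) x) x := by
  have hcont (m n : ℕ) := continuousOn_uncurry_momentIntegrand (K := angleSquare) m n
  have hint (m n : ℕ) := integrableOn_momentIntegrand m n hx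
  refine (hasDerivAt_setIntegral_of_continuousOn isCompact_angleSquare measurableSet_angleSquare
    isOpen_regularSet (fun y hy ↦ (hcont m n).uncurry_left y hy)
    (((hcont (m - 1) n).const_mul _).fun_sub ((hcont (m + 1) (n + 2)).const_mul _))
    (fun y hy θ _ ↦ hasDerivAt_momentIntegrand m n hy θ) hx).congr_deriv ?_
  simp only [moment]
  rw [integral_sub ((hint _ _).const_mul _) ((hint _ _).const_mul _), integral_const_mul,
    integral_const_mul]

theorem hasDerivAt_flux (hx : x ∈ regularSet) (s t : ℝ) :
    HasDerivAt (fun s ↦ flux x (s, t)) (fluxDeriv x (s, t)) s := by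
  have hweight := (((hasDerivAt_cos s).const_add (7 * cos t)).const_mul (x ^ 2 / 4)).const_add
    (x * (1 + x ^ 2) / 2)
  refine ((((hasDerivAt_sin s).fun_mul hweight).fun_mul
    ((hasDerivAt_kernel_angle hx s t).fun_pow 5)).const_mul (1 - x ^ 2)).congr_deriv ?_
  simp only [fluxDeriv, Nat.reduceSub]
  push_cast
  ring

end Differentiation

theorem integral_fluxDeriv (hx : x ∈ regularSet) : ∫ θ in angleSquare, fluxDeriv x θ = 0 :=
  setIntegral_Icc_prod_eq_zero_of_hasDerivAt pi_nonneg measurableSet_Icc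
    (fun t _ s _ ↦ hasDerivAt_flux hx s t)
    ((continuous_fluxDeriv hx).continuousOn.integrableOn_compact isCompact_angleSquare)
    fun t _ ↦ by simp [flux]

theorem integral_fluxDeriv_add_swap (hx : x ∈ regularSet) :
    ∫ θ in angleSquare, (fluxDeriv x θ + fluxDeriv x θ.swap) = 0 := by
  have hcont := continuous_fluxDeriv hx
  have hcont_swap : Continuous fun θ : ℝ × ℝ ↦ fluxDeriv x θ.swap := hcont.comp continuous_swap
  have hswap : ∫ θ in angleSquare, fluxDeriv x θ.swap = ∫ θ in angleSquare, fluxDeriv x θ :=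
    setIntegral_prod_swap (Icc 0 π) (Icc 0 π) (fluxDeriv x)
  rw [integral_add (hcont.continuousOn.integrableOn_compact isCompact_angleSquare)
    (hcont_swap.continuousOn.integrableOn_compact isCompact_angleSquare),
    hswap, integral_fluxDeriv hx, add_zero]

theorem momentIntegrand_combination_eq_divergence (hx : x ∈ regularSet) (θ : ℝ × ℝ) :
    x ^ 3 * (1 + x ^ 2) * (9 / 2 * momentIntegrand 1 5 x θ - 15 / 8 * momentIntegrand 3 7 x θ)
      + 3 * x ^ 2 * (2 * x ^ 2 + 1)
        * (3 / 4 * momentIntegrand 2 5 x θ - momentIntegrand 0 3 x θ)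
      + x * (7 * x ^ 2 + 1) * (-(1 / 2) * momentIntegrand 1 3 x θ)
      + x ^ 2 * momentIntegrand 0 1 x θ = fluxDeriv x θ + fluxDeriv x θ.swap := by
  -- Since `R * w ^ 2 = 1`, each odd power of `w` below the seventh is a polynomial times `w ^ 7`.
  have hw := radicand_mul_kernel_sq hx θ
  simp only [momentIntegrand, fluxDeriv, kernel_swap, Prod.fst_swap, Prod.snd_swap, sin_sq]
  generalize kernel x θ = w at hw ⊢
  have h₅ : w ^ 5 = radicand x θ * w ^ 7 := by linear_combination -w ^ 5 * hw
  have h₃ : w ^ 3 = radicand x θ ^ 2 * w ^ 7 := by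
    linear_combination -w ^ 3 * hw + radicand x θ * h₅
  have h₁ : w ^ 1 = radicand x θ ^ 3 * w ^ 7 := by
    linear_combination -w * hw + radicand x θ * h₃
  rw [h₅, h₃, h₁, radicand, radicandDeriv]
  ring

theorem moment_combination_eq_zero (hx : x ∈ regularSet) :
    x ^ 3 * (1 + x ^ 2) * (9 / 2 * moment 1 5 x - 15 / 8 * moment 3 7 x)
      + 3 * x ^ 2 * (2 * x ^ 2 + 1) * (3 / 4 * moment 2 5 x - moment 0 3 x)
      + x * (7 * x ^ 2 + 1) * (-(1 / 2) * moment 1 3 x) + x ^ 2 * moment 0 1 x = 0 := by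
  have hint (m n : ℕ) : Integrable (momentIntegrand m n x) (volume.restrict angleSquare) :=
    integrableOn_momentIntegrand m n hx
  rw [← integral_fluxDeriv_add_swap hx]
  simp only [← momentIntegrand_combination_eq_divergence hx, moment]
  simp (discharger := fun_prop) only [integral_add, integral_sub, integral_const_mul]

theorem eqOn_moment : EqOn Xi200 (fun x ↦ 1 / 4 * moment 0 1 x) regularSet := by
  intro x hx
  simp only [moment]
  rw [angleSquare, setIntegral_Icc_prod_Icc pi_nonneg pi_nonneg
    (integrableOn_momentIntegrand 0 1 hx)]
  simp only [Xi200, momentIntegrand, kernel, radicand, pow_zero, one_mul, pow_one]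

theorem eqOn_iteratedDeriv_one :
    EqOn (iteratedDeriv 1 Xi200) (fun x ↦ 1 / 4 * (-(1 / 2) * moment 1 3 x)) regularSet := by
  intro x hx
  refine iteratedDeriv_succ_eq_of_eqOn isOpen_regularSet
    (by simpa only [iteratedDeriv_zero] using eqOn_moment) hx
    (((hasDerivAt_moment 0 1 hx).const_mul _).congr_deriv ?_)
  norm_num

theorem eqOn_iteratedDeriv_two :
    EqOn (iteratedDeriv 2 Xi200)
      (fun x ↦ 1 / 4 * (3 / 4 * moment 2 5 x - moment 0 3 x)) regularSet := by
  intro x hx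
  refine iteratedDeriv_succ_eq_of_eqOn isOpen_regularSet eqOn_iteratedDeriv_one hx
    ((((hasDerivAt_moment 1 3 hx).const_mul _).const_mul _).congr_deriv ?_)
  push_cast
  ring

theorem eqOn_iteratedDeriv_three :
    EqOn (iteratedDeriv 3 Xi200)
      (fun x ↦ 1 / 4 * (9 / 2 * moment 1 5 x - 15 / 8 * moment 3 7 x)) regularSet := by
  intro x hx
  refine iteratedDeriv_succ_eq_of_eqOn isOpen_regularSet eqOn_iteratedDeriv_two hx
    (((((hasDerivAt_moment 2 5 hx).const_mul _).fun_sub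
      (hasDerivAt_moment 0 3 hx)).const_mul _).congr_deriv ?_)
  push_cast
  ring

end Xi200

theorem Xi200_third_order_ODE_general (x : ℝ) (hx : |x| ≠ 1) :
    x ^ 3 * (1 + x ^ 2) * iteratedDeriv 3 Xi200 x
      + 3 * x ^ 2 * (2 * x ^ 2 + 1) * iteratedDeriv 2 Xi200 x
      + x * (7 * x ^ 2 + 1) * deriv Xi200 x
      + x ^ 2 * Xi200 x = 0 := by
  rw [← iteratedDeriv_one, Xi200.eqOn_iteratedDeriv_three hx, Xi200.eqOn_iteratedDeriv_two hx,
    Xi200.eqOn_iteratedDeriv_one hx, Xi200.eqOn_moment hx]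
  linear_combination 1 / 4 * Xi200.moment_combination_eq_zero hx

theorem Xi200_third_order_ODE (x : ℝ) (hx0 : 0 < x) (hx1 : x < 1) :
    x ^ 3 * (1 + x ^ 2) * iteratedDeriv 3 Xi200 x
      + 3 * x ^ 2 * (2 * x ^ 2 + 1) * iteratedDeriv 2 Xi200 x
      + x * (7 * x ^ 2 + 1) * deriv Xi200 x
      + x ^ 2 * Xi200 x = 0 :=
  Xi200_third_order_ODE_general x (by rw [abs_of_pos hx0]; exact hx1.ne)
end
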